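/- Let ℓ ≥ 3, k a finite field of characteristic ℓ, G a profinite group, χ_cyc : G → k^× a continuous character (mod-ℓ cyclotomic character), and ρ : G → GL₂(k̄) a continuous representation such that (ad⁰ρ)^ss ≅ 1 ⊕ ω ⊕ ω⁻¹ where ω = χ_cyc mod ℓ. If ρ is absolutely irreducible, then either ω or ω⁻¹ occurs as a subrepresentation of (ad⁰ρ)^ss only when ρ is induced from the kernel of ω, and such induced representations never have adjoint of this form; consequently ρ must be reducible, and ρ^ss ≅ χ̄ ⊕ χ̄·ω for some character χ̄ : G → k̄^×. -/

import Mathlib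

/-!
The trace of `ad⁰ M` is `(tr M)² / det M - 1`, so the hypothesis amounts to
`(tr ρ(g))² ω(g) = det ρ(g) (1 + ω(g))²`: the two eigenvalues of `ρ(g)` have ratio `ω(g)` or
`ω(g)⁻¹` (`trace_sq_of_charpoly`).

The main point is that `ρ` has an invariant line (`exists_common_eigenvector`). On `H = ker ω`
every `ρ(h)` is a scalar `s` plus a trace-zero nilpotent `N`. Comparing the relations at `hh'` and
`hh'²` in characteristic not `2` gives `tr (N N') = 0` (`two_trace_mul`), hence all the nilpotent
parts are proportional (`mulVec_eq_zero_of_nilp`). If some `N` is nonzero, its kernel is a line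
stable under `G`, because `H` is normal. If all `ρ(h)` are scalar, commutators in `ρ(G)` are
scalars of determinant `1`, thus `±1`; the value `-1` at `g, h` would make `ρ(g)`, `ρ(h)` and
`ρ(gh)` traceless, so `ω(g) = ω(h) = ω(gh) = -1`, which is absurd. So `ρ(G)` is commutative and
has a common eigenvector over the algebraically closed field `K`.

An invariant line excludes absolute irreducibility (`not_absIrred`) and gives characters `a, b`
on the diagonal (`exists_characters`). For each `g`, either `b = aω` or `a = bω` at `g`; since a
group is not the union of two proper subgroups, one of the two holds throughout, and `χ` is `a` or
`b` accordingly.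
-/

open Matrix Polynomial

/-- `ρ` is absolutely irreducible: the matrices in the image of `ρ` span the full
matrix algebra `M₂(K)` (Burnside's criterion). -/
def AbsIrred {K G : Type*} [Field K] [Group G]
    (ρ : G →* GL (Fin 2) K) : Prop :=
  Submodule.span K {m : Matrix (Fin 2) (Fin 2) K | ∃ g : G, m = (ρ g).val} = ⊤

/-- Trace-zero `2 × 2` matrices over `K`. -/
noncomputable def sl2 (K : Type*) [Field K] : Submodule K (Matrix (Fin 2) (Fin 2) K) :=
  LinearMap.ker (Matrix.traceLinearMap (Fin 2) K K)

/-- Conjugation by an invertible matrix, as a linear endomorphism of `M₂(K)`. -/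
noncomputable def conjLM {K : Type*} [Field K] (M : GL (Fin 2) K) :
    Matrix (Fin 2) (Fin 2) K →ₗ[K] Matrix (Fin 2) (Fin 2) K where
  toFun A := M.val * A * (M⁻¹).val
  map_add' A B := by simp [mul_add, add_mul]
  map_smul' c A := by simp [Matrix.mul_smul, Matrix.smul_mul]

/-- The adjoint action `ad⁰` of an invertible matrix on trace-zero matrices. -/
noncomputable def ad0 {K : Type*} [Field K] (M : GL (Fin 2) K) :
    sl2 K →ₗ[K] sl2 K :=
  (conjLM M).restrict (p := sl2 K) (q := sl2 K) (by
    intro A hA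
    simp only [sl2, LinearMap.mem_ker, Matrix.traceLinearMap_apply, conjLM,
      LinearMap.coe_mk, AddHom.coe_mk] at *
    rw [Matrix.trace_mul_cycle, ← Units.val_mul, inv_mul_cancel, Units.val_one, one_mul, hA])

/-! ### The trace of the adjoint action -/

/-- Coordinates `(A₀₀, A₀₁, A₁₀)` on the trace-zero matrices. -/
noncomputable def sl2Equiv (K : Type*) [Field K] : sl2 K ≃ₗ[K] (Fin 3 → K) where
  toFun A := ![A.1 0 0, A.1 0 1, A.1 1 0]
  map_add' A B := by ext i; fin_cases i <;> simp
  map_smul' c A := by ext i; fin_cases i <;> simp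
  invFun x := ⟨!![x 0, x 1; x 2, -x 0], by simp [sl2, Matrix.trace_fin_two]⟩
  left_inv A := by
    obtain ⟨A, hA⟩ := A
    have h : A 0 0 + A 1 1 = 0 := by
      simpa [sl2, Matrix.trace_fin_two] using hA
    ext i j
    fin_cases i <;> fin_cases j <;> simp
    linear_combination -h
  right_inv x := by ext i; fin_cases i <;> simp

/-- The trace of `ad⁰ M` is `(tr M)² / det M - 1`. -/
lemma trace_ad0 {K : Type*} [Field K] (M : GL (Fin 2) K) :
    LinearMap.trace K _ (ad0 M) * M.val.det = M.val.trace ^ 2 - M.val.det := by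
  have hd : M.val.det ≠ 0 := ((Matrix.isUnit_iff_isUnit_det _).1 M.isUnit).ne_zero
  rw [LinearMap.trace_eq_matrix_trace K (Module.Basis.ofEquivFun (sl2Equiv K)),
    Matrix.trace_fin_three]
  simp only [LinearMap.toMatrix_apply, Module.Basis.ofEquivFun_repr_apply,
    Module.Basis.coe_ofEquivFun]
  simp only [sl2Equiv, ad0, conjLM, LinearEquiv.coe_mk, LinearMap.coe_mk, AddHom.coe_mk,
    LinearEquiv.coe_symm_mk', LinearMap.coe_restrict_apply, Matrix.coe_units_inv, Matrix.inv_def,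
    Matrix.adjugate_fin_two, Ring.inverse_eq_inv']
  simp [Matrix.mul_apply, Fin.sum_univ_two, Matrix.trace_fin_two]
  field_simp
  rw [Matrix.det_fin_two]
  ring

/-- The hypothesis on `ad⁰` says that the eigenvalues of `M` have ratio `w` or `w⁻¹`, written
here without choosing eigenvalues. -/
lemma trace_sq_of_charpoly {K : Type*} [Field K] (M : GL (Fin 2) K) (w : Kˣ)
    (h : (ad0 M).charpoly = (X - C (1 : K)) * (X - C (w : K)) * (X - C ((w⁻¹ : Kˣ) : K))) :
    M.val.trace ^ 2 * w = M.val.det * (1 + w) ^ 2 := by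
  have h1 : LinearMap.trace K _ (ad0 M) = 1 + w + (w : K)⁻¹ := by
    rw [LinearMap.trace_eq_matrix_trace K (Module.Basis.ofEquivFun (sl2Equiv K)),
      Matrix.trace_eq_neg_charpoly_nextCoeff, LinearMap.charpoly_toMatrix, h,
      ((monic_X_sub_C _).mul (monic_X_sub_C _)).nextCoeff_mul (monic_X_sub_C _),
      (monic_X_sub_C _).nextCoeff_mul (monic_X_sub_C _)]
    simp only [nextCoeff_X_sub_C, Units.val_inv_eq_inv_val]
    ring
  have h2 := trace_ad0 M
  have hw : (w : K) ≠ 0 := w.ne_zero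
  rw [h1] at h2
  field_simp at h2
  linear_combination -h2

/-! ### Orthogonality of nilpotent parts -/

/-- If `A`, `B`, `AB`, `AB²` are all scalar multiples of unipotents, then the nilpotent parts of
`A` and `B` are orthogonal for the trace form. The relation for `AB` gives
`2 tr(AB) = ± tr A tr B`, and the one for `AB²` rules out the minus sign. -/
lemma two_trace_mul {K : Type*} [Field K] (h2 : (2 : K) ≠ 0) (A B : Matrix (Fin 2) (Fin 2) K)
    (hdA : A.det ≠ 0) (hdB : B.det ≠ 0)
    (hA : A.trace ^ 2 = 4 * A.det) (hB : B.trace ^ 2 = 4 * B.det)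
    (hAB : (A * B).trace ^ 2 = 4 * (A * B).det)
    (hABB : (A * B * B).trace ^ 2 = 4 * (A * B * B).det) :
    2 * (A * B).trace = A.trace * B.trace := by
  have hC : (A * B * B).trace = B.trace * (A * B).trace - B.det * A.trace := by
    simp [Matrix.trace_fin_two, Matrix.mul_apply, Fin.sum_univ_two, Matrix.det_fin_two]
    ring
  rw [hC, Matrix.det_mul, Matrix.det_mul] at hABB
  rw [Matrix.det_mul] at hAB
  generalize (A * B).trace = u at *
  generalize A.trace = a at *
  generalize B.trace = b at *
  generalize A.det = x at *
  generalize B.det = y at *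
  have h : (2 * u - a * b) * (2 * u + a * b) = 0 := by
    linear_combination 4 * hAB - b ^ 2 * hA - 4 * x * hB
  rcases mul_eq_zero.1 h with h | h
  · linear_combination h
  · exfalso
    have : (2 : K) ^ 7 * (x * y ^ 2) = 0 := by
      grind
    exact mul_ne_zero (pow_ne_zero _ h2) (mul_ne_zero hdA (pow_ne_zero _ hdB)) this

/-- Trace-zero nilpotent `2 × 2` matrices orthogonal for the trace form are proportional, so the
kernel of a nonzero one lies in the kernel of the other. -/
lemma mulVec_eq_zero_of_nilp {K : Type*} [Field K] (N N' : Matrix (Fin 2) (Fin 2) K)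
    (hN : N ≠ 0) (ht : N.trace = 0) (ht' : N'.trace = 0) (hd : N.det = 0) (hd' : N'.det = 0)
    (hNN : (N * N').trace = 0) (v : Fin 2 → K) (hv : N *ᵥ v = 0) : N' *ᵥ v = 0 := by
  have v0 := congrFun hv 0
  have v1 := congrFun hv 1
  simp [Matrix.mulVec, dotProduct, Fin.sum_univ_two] at v0 v1
  simp only [Matrix.trace_fin_two, Matrix.det_fin_two, Matrix.mul_apply, Fin.sum_univ_two]
    at ht ht' hd hd' hNN
  have hne : N 0 0 ≠ 0 ∨ N 0 1 ≠ 0 ∨ N 1 0 ≠ 0 := by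
    by_contra! h
    apply hN
    ext i j
    fin_cases i <;> fin_cases j <;> simp [h]
    linear_combination ht - h.1
  have e : N 1 1 = - N 0 0 := by linear_combination ht
  have e' : N' 1 1 = - N' 0 0 := by linear_combination ht'
  rw [e] at hd hNN v1
  rw [e'] at hd' hNN
  have p1 : N 0 0 * N' 0 1 = N' 0 0 * N 0 1 := by
    rw [← sub_eq_zero, ← sq_eq_zero_iff]
    grind
  have p2 : N 0 0 * N' 1 0 = N' 0 0 * N 1 0 := by
    rw [← sub_eq_zero, ← sq_eq_zero_iff]
    grind
  have p3 : N 0 1 * N' 1 0 = N' 0 1 * N 1 0 := by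
    rw [← sub_eq_zero, ← sq_eq_zero_iff]
    grind
  ext i
  fin_cases i <;> simp [Matrix.mulVec, dotProduct, Fin.sum_univ_two, e'] <;>
  · rcases hne with h | h | h <;> apply mul_left_cancel₀ h <;> grind

/-- The kernel of a nonzero `2 × 2` matrix is at most a line. -/
lemma exists_smul_of_mulVec {K : Type*} [Field K] (M : Matrix (Fin 2) (Fin 2) K) (hM : M ≠ 0)
    (v w : Fin 2 → K) (hv0 : v ≠ 0) (hv : M *ᵥ v = 0) (hw : M *ᵥ w = 0) :
    ∃ c : K, w = c • v := by
  obtain ⟨i, j, hij⟩ : ∃ i j, M i j ≠ 0 := by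
    by_contra! h
    exact hM (by ext i j; exact h i j)
  have hvi := congrFun hv i
  have hwi := congrFun hw i
  simp [Matrix.mulVec, dotProduct, Fin.sum_univ_two] at hvi hwi
  have hD : v 0 * w 1 = v 1 * w 0 := by
    fin_cases j <;> apply mul_left_cancel₀ hij <;> simp <;> grind
  obtain ⟨l, hl⟩ : ∃ l, v l ≠ 0 := by
    by_contra! h
    exact hv0 (funext h)
  refine ⟨w l / v l, ?_⟩
  ext m
  fin_cases l <;> fin_cases m <;> simp at hl ⊢ <;> field_simp <;> grind

/-! ### Existence of an invariant line -/

/-- A representation with the trace identity has an invariant line. On `ker ω` every element is a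
scalar times a unipotent. If one of them is not scalar, the kernel of its nilpotent part is
stable under all of `G`; otherwise `ρ` has scalar commutators, and these are trivial. -/
lemma exists_common_eigenvector {G K : Type*} [Group G] [Field K] [IsAlgClosed K]
    (h2 : (2 : K) ≠ 0) (ρ : G →* GL (Fin 2) K) (ω : G →* Kˣ)
    (hk : ∀ g, (ρ g).val.trace ^ 2 * ω g = (ρ g).val.det * (1 + ω g) ^ 2) :
    ∃ v : Fin 2 → K, v ≠ 0 ∧ ∀ g, ∃ c : K, (ρ g).val *ᵥ v = c • v := by
  have hdet : ∀ g, (ρ g).val.det ≠ 0 := fun g =>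
    ((Matrix.isUnit_iff_isUnit_det _).1 (ρ g).isUnit).ne_zero
  have hmul : ∀ g h, (ρ (g * h)).val = (ρ g).val * (ρ h).val := fun g h => by
    rw [map_mul, Units.val_mul]
  have hH : ∀ g, ω g = 1 → (ρ g).val.trace ^ 2 = 4 * (ρ g).val.det := fun g hg => by
    have := hk g
    rw [hg, Units.val_one] at this
    linear_combination this
  -- is some element of `ker ω` not scalar?
  by_cases hs : ∃ h, ω h = 1 ∧ ∀ c : K, (ρ h).val ≠ c • (1 : Matrix (Fin 2) (Fin 2) K)
  · obtain ⟨h, hω, hns⟩ := hs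
    -- the nilpotent part of an element of `ker ω`
    set N : G → Matrix (Fin 2) (Fin 2) K := fun x =>
      (ρ x).val - ((ρ x).val.trace / 2) • (1 : Matrix (Fin 2) (Fin 2) K) with hNdef
    have hNt : ∀ x, (N x).trace = 0 := fun x => by
      simp [hNdef, Matrix.trace_fin_two]
      field_simp
      ring
    have hNd : ∀ x, ω x = 1 → (N x).det = 0 := fun x hx => by
      have := hH x hx
      simp [hNdef, Matrix.trace_fin_two, Matrix.det_fin_two] at this ⊢
      field_simp
      linear_combination -this
    have hN0 : N h ≠ 0 := fun e => hns _ (sub_eq_zero.1 e)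
    have hNN : ∀ x y, ω x = 1 → ω y = 1 → (N x * N y).trace = 0 := fun x y hx hy => by
      have := two_trace_mul h2 (ρ x).val (ρ y).val (hdet x) (hdet y) (hH x hx) (hH y hy)
        (by rw [← hmul]; exact hH _ (by simp [hx, hy]))
        (by rw [← hmul, ← hmul]; exact hH _ (by simp [hx, hy]))
      simp [hNdef, Matrix.trace_fin_two, Matrix.mul_apply, Fin.sum_univ_two] at this ⊢
      field_simp
      linear_combination 2 * this
    obtain ⟨v, hv0, hv⟩ := Matrix.exists_mulVec_eq_zero_iff.2 (hNd h hω)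
    refine ⟨v, hv0, fun g => exists_smul_of_mulVec (N h) hN0 v _ hv0 hv ?_⟩
    have hc : ω (g⁻¹ * h * g) = 1 := by simp [hω]
    have hz := mulVec_eq_zero_of_nilp (N h) (N (g⁻¹ * h * g)) hN0 (hNt _) (hNt _) (hNd _ hω)
      (hNd _ hc) (hNN _ _ hω hc) v hv
    have hi : (ρ g).val * (ρ g⁻¹).val = 1 := by rw [← hmul]; simp
    have hgN : (ρ g).val * N (g⁻¹ * h * g) = N h * (ρ g).val := by
      have ht : (ρ (g⁻¹ * h * g)).val.trace = (ρ h).val.trace := by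
        rw [hmul, hmul, Matrix.trace_mul_comm, ← mul_assoc, hi, one_mul]
      simp only [hNdef]
      rw [ht, mul_sub, sub_mul, ← hmul, mul_assoc, mul_inv_cancel_left, hmul]
      simp
    rw [Matrix.mulVec_mulVec, ← hgN, ← Matrix.mulVec_mulVec, hz, Matrix.mulVec_zero]
  · push Not at hs
    have hcomm : ∀ g h, (ρ g).val * (ρ h).val = (ρ h).val * (ρ g).val := fun g h => by
      obtain ⟨c, hc⟩ := hs (g * h * (h * g)⁻¹) (by
        rw [map_mul, map_inv, map_mul, map_mul, mul_comm (ω h), mul_inv_cancel])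
      have he : (ρ g).val * (ρ h).val = c • ((ρ h).val * (ρ g).val) := by
        rw [← hmul, ← hmul, ← inv_mul_cancel_right (g * h) (h * g), hmul, hc]
        simp
      have hcc : c ^ 2 = 1 := by
        have := congrArg Matrix.det he
        rw [Matrix.det_smul, Matrix.det_mul, Matrix.det_mul, Fintype.card_fin] at this
        apply mul_right_cancel₀ (mul_ne_zero (hdet h) (hdet g))
        linear_combination -this
      rcases sq_eq_sq_iff_eq_or_eq_neg.1 (hcc.trans (one_pow 2).symm) with rfl | rfl
      · simpa using he
      · exfalso
        -- anticommuting `ρ g`, `ρ h` force the traces at `g`, `h` and `g * h` to vanish,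
        -- so that `ω` would be `-1` at all three
        rw [neg_one_smul] at he
        have hone : ∀ x, (ρ x).val.trace = -(ρ x).val.trace → (ω x : K) = -1 := fun x hx => by
          have ht : (ρ x).val.trace = 0 := by
            apply mul_left_cancel₀ h2
            linear_combination hx
          have := hk x
          rw [ht, zero_pow two_ne_zero, zero_mul, zero_eq_mul] at this
          have := pow_eq_zero_iff two_ne_zero |>.1 (this.resolve_left (hdet x))
          linear_combination this
        have hconj : ∀ x y, (ρ x).val * (ρ y).val = -((ρ y).val * (ρ x).val) →
            (ρ x).val.trace = -(ρ x).val.trace := fun x y hxy => by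
          have hi : (ρ y).val * (ρ y⁻¹).val = 1 := by rw [← hmul]; simp
          have hi' : (ρ y⁻¹).val * (ρ y).val = 1 := by rw [← hmul]; simp
          calc (ρ x).val.trace = ((ρ x).val * (ρ y).val * (ρ y⁻¹).val).trace := by
                rw [mul_assoc, hi, mul_one]
            _ = -(ρ x).val.trace := by
                rw [hxy, neg_mul, Matrix.trace_neg, Matrix.trace_mul_comm, ← mul_assoc, hi',
                  one_mul]
        have hg := hone g (hconj g h he)
        have hh := hone h (hconj h g (by rw [he, neg_neg]))
        have hgh := hone (g * h) (by
          rw [hmul]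
          conv_lhs => rw [he, Matrix.trace_neg, Matrix.trace_mul_comm])
        rw [map_mul, Units.val_mul, hg, hh] at hgh
        apply h2
        linear_combination hgh
    by_cases hsc : ∀ g, ∃ c : K, (ρ g).val = c • (1 : Matrix (Fin 2) (Fin 2) K)
    · refine ⟨![1, 0], fun e => one_ne_zero (congrFun e 0), fun g => ?_⟩
      obtain ⟨c, hc⟩ := hsc g
      exact ⟨c, by rw [hc]; simp⟩
    · push Not at hsc
      obtain ⟨g₀, hg₀⟩ := hsc
      obtain ⟨c, hc⟩ := IsAlgClosed.exists_root (ρ g₀).val.charpoly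
        (by rw [Matrix.charpoly_degree_eq_dim]; simp)
      have hM : ((ρ g₀).val - c • (1 : Matrix (Fin 2) (Fin 2) K)).det = 0 := by
        rw [Matrix.charpoly_fin_two] at hc
        simp [Matrix.trace_fin_two, Matrix.det_fin_two] at hc ⊢
        linear_combination hc
      obtain ⟨v, hv0, hv⟩ := Matrix.exists_mulVec_eq_zero_iff.2 hM
      refine ⟨v, hv0, fun g => exists_smul_of_mulVec _ (sub_ne_zero.2 (hg₀ c)) v _ hv0 hv ?_⟩
      have : ((ρ g₀).val - c • (1 : Matrix (Fin 2) (Fin 2) K)) * (ρ g).val =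
          (ρ g).val * ((ρ g₀).val - c • (1 : Matrix (Fin 2) (Fin 2) K)) := by
        rw [sub_mul, mul_sub, hcomm g₀ g]
        simp
      rw [Matrix.mulVec_mulVec, this, ← Matrix.mulVec_mulVec, hv, Matrix.mulVec_zero]

/-! ### Consequences of an invariant line -/

lemma not_absIrred {G K : Type*} [Group G] [Field K] (ρ : G →* GL (Fin 2) K) (v : Fin 2 → K)
    (hv0 : v ≠ 0) (hv : ∀ g, ∃ c : K, (ρ g).val *ᵥ v = c • v) : ¬ AbsIrred ρ := by
  intro hirr
  have key : ∀ m : Matrix (Fin 2) (Fin 2) K, ∃ c : K, m *ᵥ v = c • v := fun m => by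
    have hm : m ∈ Submodule.span K
        {m : Matrix (Fin 2) (Fin 2) K | ∃ g : G, m = (ρ g).val} := by
      rw [show Submodule.span K _ = ⊤ from hirr]
      trivial
    induction hm using Submodule.span_induction with
    | mem x hx => obtain ⟨g, rfl⟩ := hx; exact hv g
    | zero => exact ⟨0, by simp⟩
    | add x y _ _ hx hy =>
      obtain ⟨a, ha⟩ := hx
      obtain ⟨b, hb⟩ := hy
      exact ⟨a + b, by rw [Matrix.add_mulVec, ha, hb, add_smul]⟩
    | smul r x _ hx =>
      obtain ⟨a, ha⟩ := hx
      exact ⟨r * a, by rw [Matrix.smul_mulVec, ha, smul_smul]⟩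
  -- no nonzero vector is an eigenvector of both elementary nilpotent matrices
  obtain ⟨a, ha⟩ := key !![0, 1; 0, 0]
  obtain ⟨b, hb⟩ := key !![0, 0; 1, 0]
  have a0 := congrFun ha 0
  have a1 := congrFun ha 1
  have b0 := congrFun hb 0
  have b1 := congrFun hb 1
  simp [Matrix.mulVec, dotProduct, Fin.sum_univ_two] at a0 a1 b0 b1
  apply hv0
  ext i
  fin_cases i <;> simp <;> grind

/-- The eigenvalue on an invariant line is a character, and the determinant gives the other
one. -/
lemma exists_characters {G K : Type*} [Group G] [Field K] (ρ : G →* GL (Fin 2) K)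
    (v : Fin 2 → K) (hv0 : v ≠ 0) (hv : ∀ g, ∃ c : K, (ρ g).val *ᵥ v = c • v) :
    ∃ a b : G →* Kˣ, ∀ g, (ρ g).val.trace = a g + b g ∧ (ρ g).val.det = a g * b g := by
  choose f hf using hv
  let F : G →* K :=
    { toFun := f
      map_one' := by
        apply smul_left_injective K hv0
        simp [← hf]
      map_mul' := fun x y => by
        apply smul_left_injective K hv0
        simp only [← hf]
        rw [map_mul, Units.val_mul, ← Matrix.mulVec_mulVec, hf, Matrix.mulVec_smul, hf,
          smul_smul, mul_comm] }
  have hF : ∀ g, (F.toHomUnits g : K) = f g := fun g => rfl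
  refine ⟨F.toHomUnits, (Matrix.GeneralLinearGroup.det.comp ρ) / F.toHomUnits, fun g => ?_⟩
  have hne : f g ≠ 0 := (F.toHomUnits g).ne_zero
  have hb : ((((Matrix.GeneralLinearGroup.det.comp ρ) / F.toHomUnits) g : Kˣ) : K) =
      (ρ g).val.det / f g := by
    rw [MonoidHom.div_apply, Units.val_div_eq_div_val, hF]
    rfl
  have h0 : ((ρ g).val - f g • (1 : Matrix (Fin 2) (Fin 2) K)).det = 0 :=
    Matrix.exists_mulVec_eq_zero_iff.1 ⟨v, hv0, by
      rw [Matrix.sub_mulVec, hf, Matrix.smul_mulVec, Matrix.one_mulVec, sub_self]⟩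
  rw [hb, hF]
  refine ⟨?_, by field_simp⟩
  field_simp
  simp [Matrix.trace_fin_two, Matrix.det_fin_two] at h0 ⊢
  linear_combination -h0

/-- A group is not the union of two proper subgroups, stated for equality loci of characters. -/
lemma forall_or_forall {G A : Type*} [Group G] [Group A] (f₁ f₂ f₃ f₄ : G →* A)
    (h : ∀ g, f₁ g = f₂ g ∨ f₃ g = f₄ g) : (∀ g, f₁ g = f₂ g) ∨ ∀ g, f₃ g = f₄ g := by
  by_contra! hc
  obtain ⟨⟨x, hx⟩, y, hy⟩ := hc
  have hx' := (h x).resolve_left hx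
  have hy' := (h y).resolve_right hy
  rcases h (x * y) with e | e <;> rw [map_mul, map_mul] at e
  · rw [hy'] at e
    exact hx (mul_right_cancel e)
  · rw [hx'] at e
    exact hy (mul_left_cancel e)

/-- Let `ℓ ≥ 3`, `K` of characteristic `ℓ` (standing for `k̄`),
`ω : G → Kˣ` the mod-`ℓ` cyclotomic character, and `ρ : G → GL₂(K)` with
`(ad⁰ρ)^ss ≅ 1 ⊕ ω ⊕ ω⁻¹` (expressed, via Brauer–Nesbitt, by equality of
characteristic polynomials).  Then `ρ` cannot be absolutely irreducible, and
`ρ^ss ≅ χ̄ ⊕ χ̄·ω` for some character `χ̄ : G → Kˣ` (again expressed via the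
characteristic polynomials of `ρ`). -/
theorem stmt5 {G K : Type*} [Group G] [Field K] [IsAlgClosed K]
    (ℓ : ℕ) (hℓ : ℓ.Prime) (h3 : 3 ≤ ℓ) [CharP K ℓ]
    (ρ : G →* GL (Fin 2) K) (ω : G →* Kˣ)
    (had : ∀ g : G, (ad0 (ρ g)).charpoly =
      (X - C (1 : K)) * (X - C ((ω g : K))) * (X - C (((ω g)⁻¹ : Kˣ) : K))) :
    ¬ AbsIrred ρ ∧ ∃ χ : G →* Kˣ, ∀ g : G,
      ((ρ g).val).charpoly = (X - C ((χ g : K))) * (X - C ((χ g : K) * (ω g : K))) := by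
  have h2 : (2 : K) ≠ 0 := by
    intro h
    have h' : ((2 : ℕ) : K) = 0 := by exact_mod_cast h
    rw [CharP.cast_eq_zero_iff K ℓ] at h'
    exact absurd (Nat.le_of_dvd two_pos h') (by omega)
  have hk := fun g => trace_sq_of_charpoly (ρ g) (ω g) (had g)
  obtain ⟨v, hv0, hv⟩ := exists_common_eigenvector h2 ρ ω hk
  refine ⟨not_absIrred ρ v hv0 hv, ?_⟩
  obtain ⟨a, b, hab⟩ := exists_characters ρ v hv0 hv
  have hor : ∀ g, b g = (a * ω) g ∨ a g = (b * ω) g := fun g => by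
    have h := hk g
    rw [(hab g).1, (hab g).2] at h
    have : ((b g : K) - a g * ω g) * (a g - b g * ω g) = 0 := by linear_combination -h
    simp only [MonoidHom.mul_apply, Units.ext_iff, Units.val_mul]
    exact (mul_eq_zero.1 this).imp sub_eq_zero.1 sub_eq_zero.1
  rcases forall_or_forall _ _ _ _ hor with h | h
  · refine ⟨a, fun g => ?_⟩
    rw [Matrix.charpoly_fin_two, (hab g).1, (hab g).2, h g]
    simp only [MonoidHom.mul_apply, Units.val_mul, C_add, C_mul]
    ring
  · refine ⟨b, fun g => ?_⟩
    rw [Matrix.charpoly_fin_two, (hab g).1, (hab g).2, h g]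
    simp only [MonoidHom.mul_apply, Units.val_mul, C_add, C_mul]
    ring
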